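/- arXiv:math/0112301 — 4 statements merged into one kernel-verified Lean document; each statement's English description precedes it below -/
import Mathlib

section
/- Borel's Lemma (Banach-valued version): Let E be a real Banach space and let (a_n)_{n∈ℕ} be an arbitrary sequence of elements of E. Then there exists an infinitely differentiable function f : ℝ → E such that for every n ∈ ℕ the n-th iterated derivative of f at 0 equals a_n. -/
open Filter Topology in
theorem borel_aux (n : ℕ) : ∃ g : ℝ → ℝ, ContDiff ℝ (⊤ : ℕ∞) g ∧
    (g =ᶠ[𝓝 0] fun x => ((n.factorial : ℝ)⁻¹) * x ^ n) ∧
    ∀ k : ℕ, ∃ C, ∀ x, ‖iteratedDeriv k g x‖ ≤ C := by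
  let φ : ContDiffBump (0 : ℝ) := ⟨1, 2, by norm_num, by norm_num⟩
  have hg : ContDiff ℝ (⊤ : ℕ∞) (fun x => ((n.factorial : ℝ)⁻¹) * x ^ n * φ x) :=
    (contDiff_const.mul (contDiff_id.pow n)).mul φ.contDiff
  refine ⟨_, hg, ?_, ?_⟩
  · filter_upwards [φ.eventuallyEq_one] with x hx
    simp [hx]
  · intro k
    have hc : HasCompactSupport (fun x => ((n.factorial : ℝ)⁻¹) * x ^ n * φ x) :=
      φ.hasCompactSupport.mul_left
    obtain ⟨C, hC⟩ := (hg.continuous_iteratedFDeriv (m := k)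
      (mod_cast le_top)).bounded_above_of_compact_support (hc.iteratedFDeriv (𝕜 := ℝ) k)
    exact ⟨C, fun x => by rw [← norm_iteratedFDeriv_eq_norm_iteratedDeriv]; exact hC x⟩

open Filter Topology in
theorem borel_aux2 {E : Type*} [NormedAddCommGroup E] [NormedSpace ℝ E] (a : E) (n : ℕ) :
    ∃ f : ℝ → E, ContDiff ℝ (⊤ : ℕ∞) f ∧ iteratedDeriv n f 0 = a ∧
      (∀ k, k ≠ n → iteratedDeriv k f 0 = 0) ∧
      (∀ k, ∃ C, ∀ x, ‖iteratedFDeriv ℝ k f x‖ ≤ C) ∧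
      ∀ k < n, ∀ x, ‖iteratedFDeriv ℝ k f x‖ ≤ (1 / 2 : ℝ) ^ n := by
  obtain ⟨g, hg, hg0, hC⟩ := borel_aux n
  choose C hC using hC
  have hC0 : ∀ k, 0 ≤ C k := fun k => (norm_nonneg _).trans (hC k 0)
  set M : ℝ := ∑ k ∈ Finset.range n, C k with hM
  have hM0 : 0 ≤ M := Finset.sum_nonneg fun k _ => hC0 k
  set c : ℝ := 1 + M * ‖a‖ * 2 ^ n with hc
  have hc1 : 1 ≤ c := by
    have : 0 ≤ M * ‖a‖ * 2 ^ n := by positivity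
    linarith
  have hcpos : 0 < c := by linarith
  have hgc : ContDiff ℝ (⊤ : ℕ∞) (fun x => g (c * x)) :=
    hg.comp (contDiff_const.mul contDiff_id)
  have hh : ContDiff ℝ (⊤ : ℕ∞) (fun x => (c ^ n)⁻¹ * g (c * x)) := contDiff_const.mul hgc
  have hD : ∀ k x, iteratedDeriv k (fun x => ((c ^ n)⁻¹ * g (c * x)) • a) x
      = ((c ^ n)⁻¹ * (c ^ k * iteratedDeriv k g (c * x))) • a := by
    intro k x
    rw [iteratedDeriv_smul_const (hh.contDiffAt.of_le (mod_cast le_top)),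
      iteratedDeriv_const_mul_field,
      iteratedDeriv_comp_const_mul (hg.of_le (mod_cast le_top))]
  have h0 : ∀ k, iteratedDeriv k g 0 = if k = n then 1 else 0 := by
    intro k
    rw [hg0.iteratedDeriv_eq, iteratedDeriv_const_mul_field, iteratedDeriv_fun_pow_zero]
    split_ifs with h1 h2 h2 <;> simp_all [Nat.factorial_ne_zero]
  have hN : ∀ k x, ‖iteratedFDeriv ℝ k (fun x => ((c ^ n)⁻¹ * g (c * x)) • a) x‖
      ≤ (c ^ n)⁻¹ * (c ^ k * C k) * ‖a‖ := by
    intro k x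
    rw [norm_iteratedFDeriv_eq_norm_iteratedDeriv, hD, norm_smul, norm_mul, norm_mul,
      norm_inv, norm_pow, norm_pow, Real.norm_of_nonneg hcpos.le]
    gcongr
    exact hC k _
  refine ⟨fun x => ((c ^ n)⁻¹ * g (c * x)) • a, hh.smul contDiff_const, ?_, ?_,
    fun k => ⟨_, hN k⟩, ?_⟩
  · rw [hD]
    simp [h0, hcpos.ne']
  · intro k hk
    rw [hD]
    simp [h0, hk]
  · intro k hk x
    refine (hN k x).trans ?_
    have h1 : C k ≤ M := Finset.single_le_sum (fun k _ => hC0 k) (Finset.mem_range.2 hk)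
    have h2 : c ^ k * c ≤ c ^ n := by
      rw [← pow_succ]; exact pow_le_pow_right₀ hc1 hk
    have h3 : C k * ‖a‖ * 2 ^ n ≤ c := by
      have : C k * ‖a‖ * 2 ^ n ≤ M * ‖a‖ * 2 ^ n := by gcongr
      linarith
    rw [one_div, inv_pow, ← one_div (2 ^ n : ℝ), le_div_iff₀ (by positivity)]
    calc (c ^ n)⁻¹ * (c ^ k * C k) * ‖a‖ * 2 ^ n
        = (c ^ n)⁻¹ * (c ^ k * (C k * ‖a‖ * 2 ^ n)) := by ring
      _ ≤ (c ^ n)⁻¹ * (c ^ k * c) := by gcongr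
      _ ≤ (c ^ n)⁻¹ * c ^ n := by gcongr
      _ = 1 := inv_mul_cancel₀ (by positivity)

/-- **Borel's Lemma** (Banach-valued version): for any sequence `a : ℕ → E` in a real
Banach space `E`, there is a smooth function `f : ℝ → E` whose `n`-th derivative at `0`
is `a n` for every `n`. -/
theorem borel_lemma_banach
    (E : Type*) [NormedAddCommGroup E] [NormedSpace ℝ E] [CompleteSpace E]
    (a : ℕ → E) :
    ∃ f : ℝ → E, ContDiff ℝ (⊤ : ℕ∞) f ∧ ∀ n : ℕ, iteratedDeriv n f 0 = a n := by
  choose f hf hn hk hC hb using fun n => borel_aux2 (a n) n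
  choose C hC using hC
  let v : ℕ → ℕ → ℝ := fun k n => if k < n then (1 / 2 : ℝ) ^ n else C n k
  have hv : ∀ k : ℕ, (k : ℕ∞) ≤ ⊤ → Summable (v k) := by
    intro k _
    have hs : Summable (fun n : ℕ => (1 / 2 : ℝ) ^ n) := summable_geometric_two
    rw [← summable_nat_add_iff (k + 1)] at hs ⊢
    refine hs.congr fun n => ?_
    have : k < n + (k + 1) := by omega
    simp [v, this]
  have hfv : ∀ (k n : ℕ) (x : ℝ), (k : ℕ∞) ≤ ⊤ → ‖iteratedFDeriv ℝ k (f n) x‖ ≤ v k n := by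
    intro k n x _
    by_cases h : k < n
    · simpa only [v, if_pos h] using hb n k h x
    · simpa only [v, if_neg h] using hC n k x
  refine ⟨fun x => ∑' n, f n x, contDiff_tsum hf hv hfv, fun n => ?_⟩
  have hs : Summable fun i => iteratedFDeriv ℝ n (f i) 0 :=
    .of_norm_bounded (hv n le_top) fun i => hfv n i 0 le_top
  rw [iteratedDeriv_eq_iteratedFDeriv, iteratedFDeriv_tsum_apply hf hv hfv le_top,
    ContinuousMultilinearMap.tsum_eval hs]
  simp_rw [← iteratedDeriv_eq_iteratedFDeriv]
  rw [tsum_eq_single n (fun m hm => hk m n hm.symm), hn]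
end

section
/- Cutoff scaling estimate: Let φ : ℝ → ℝ be a smooth function whose support is contained in [−1,1], let E be a real normed vector space, let a ∈ E, and let n ≥ 1. Then for every ε > 0 there exists λ₀ ≥ 1 such that for every λ ≥ λ₀, every integer k with 0 ≤ k ≤ n−1, and every t ∈ ℝ, the k-th iterated derivative at t of the function g_λ : ℝ → E defined by g_λ(t) = (t^n · φ(λ t) / n!) • a satisfies ‖iteratedDeriv k g_λ t‖ ≤ ε. -/
/-- **Cutoff scaling estimate**: if `φ` is smooth with support in `[-1,1]` and `n ≥ 1`,
then all derivatives of order `≤ n - 1` of `t ↦ (tⁿ φ(λ t) / n!) • a` are uniformly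
small provided the scaling parameter `λ` is large enough. -/
theorem cutoff_scaling_estimate
    (φ : ℝ → ℝ) (hφ : ContDiff ℝ (⊤ : ℕ∞) φ)
    (hsupp : Function.support φ ⊆ Set.Icc (-1 : ℝ) 1)
    {E : Type*} [NormedAddCommGroup E] [NormedSpace ℝ E]
    (a : E) (n : ℕ) (hn : 1 ≤ n) :
    ∀ ε > (0 : ℝ), ∃ lam₀ : ℝ, 1 ≤ lam₀ ∧
      ∀ lam : ℝ, lam₀ ≤ lam → ∀ k : ℕ, k ≤ n - 1 → ∀ t : ℝ,
        ‖iteratedDeriv k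
            (fun s : ℝ => ((s ^ n * φ (lam * s)) / (n.factorial : ℝ)) • a) t‖ ≤ ε := by
  intro ε hε
  set G : ℝ → E := fun s => ((s ^ n * φ s) / (n.factorial : ℝ)) • a with hG
  have hφ' : ∀ k : ℕ, ContDiff ℝ k φ := fun k => hφ.of_le (by exact_mod_cast le_top)
  have hGs : ∀ k : ℕ, ContDiff ℝ k G := by
    intro k
    have := hφ' k
    exact (((contDiff_id.pow n).mul this).div_const _).smul contDiff_const
  have hGc : HasCompactSupport G := by
    refine HasCompactSupport.intro (isCompact_Icc (a := (-1 : ℝ)) (b := 1)) ?_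
    intro x hx
    have h0 : φ x = 0 := by
      by_contra h
      exact hx (hsupp h)
    simp [hG, h0]
  have hb : ∀ k : ℕ, ∃ C : ℝ, ∀ x, ‖iteratedDeriv k G x‖ ≤ C := by
    intro k
    obtain ⟨C, hC⟩ := (hGc.iteratedFDeriv (𝕜 := ℝ) k).exists_bound_of_continuous
      ((hGs k).continuous_iteratedFDeriv le_rfl)
    exact ⟨C, fun x => by rw [← norm_iteratedFDeriv_eq_norm_iteratedDeriv]; exact hC x⟩
  choose C hC using hb
  have hC0 : ∀ k, 0 ≤ C k := fun k => (norm_nonneg _).trans (hC k 0)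
  set D := ∑ k ∈ Finset.range n, C k with hD
  refine ⟨max 1 (D / ε), le_max_left _ _, ?_⟩
  intro lam hlam k hk t
  have h1 : 1 ≤ lam := (le_max_left _ _).trans hlam
  have hpos : 0 < lam := by linarith
  have h2 : D ≤ lam * ε := (div_le_iff₀ hε).1 ((le_max_right _ _).trans hlam)
  have hkn : k < n := by omega
  have hCD : C k ≤ D :=
    Finset.single_le_sum (f := C) (fun i _ => hC0 i) (Finset.mem_range.2 hkn)
  have hg : (fun s : ℝ => ((s ^ n * φ (lam * s)) / (n.factorial : ℝ)) • a)
      = fun s => (lam ^ n)⁻¹ • G (lam * s) := by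
    funext s
    simp only [hG, smul_smul]
    congr 1
    field_simp
    ring
  have hcomp : iteratedDeriv k (fun s => G (lam * s)) t
      = lam ^ k • iteratedDeriv k G (lam * t) := by
    have := congrFun (iteratedDeriv_comp_const_smul (hGs k) lam) t
    simpa using this
  rw [hg, iteratedDeriv_fun_const_smul_field, hcomp, norm_smul, norm_smul, norm_inv, norm_pow,
    norm_pow, Real.norm_of_nonneg hpos.le, inv_mul_le_iff₀ (by positivity)]
  calc lam ^ k * ‖iteratedDeriv k G (lam * t)‖ ≤ lam ^ k * (lam * ε) := by
        gcongr
        exact (hC k _).trans (hCD.trans h2)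
    _ = lam ^ (k + 1) * ε := by ring
    _ ≤ lam ^ n * ε := by
        gcongr
        exact hkn
end

section
/- Borel's Lemma with a linear constraint: Let E and F be real Banach spaces, let D : E → F be a continuous linear map, and let (a_n)_{n∈ℕ} be a sequence in E with D a_n = 0 for every n. Then there exists a smooth function f : ℝ → E such that iteratedDeriv n f 0 = a_n for every n ∈ ℕ and D (f t) = 0 for every t ∈ ℝ. -/
theorem borel_base {E : Type*} [NormedAddCommGroup E] [NormedSpace ℝ E] (n : ℕ) (v : E) :
    ∃ g : ℝ → E, ContDiff ℝ (⊤ : ℕ∞) g ∧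
      (∀ k, iteratedDeriv k g 0 = if k = n then v else 0) ∧
      (∀ t, ∃ r : ℝ, g t = r • v) ∧
      ∃ M : ℕ → ℝ, ∀ k t, ‖iteratedDeriv k g t‖ ≤ M k := by
  let φ : ContDiffBump (0 : ℝ) := ⟨1, 2, by norm_num, by norm_num⟩
  have hg : ContDiff ℝ (⊤ : ℕ∞) (fun t : ℝ => (φ t * (t ^ n / (n.factorial : ℝ))) • v) := by
    have := φ.contDiff (n := (⊤ : ℕ∞))
    fun_prop
  have hc : HasCompactSupport (fun t : ℝ => (φ t * (t ^ n / (n.factorial : ℝ))) • v) :=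
    (φ.hasCompactSupport.mul_right (f' := fun t : ℝ => t ^ n / (n.factorial : ℝ))).smul_right
      (f' := fun _ => v)
  refine ⟨_, hg, ?_, fun t => ⟨_, rfl⟩, ?_⟩
  · intro k
    have he : (fun t : ℝ => (φ t * (t ^ n / (n.factorial : ℝ))) • v) =ᶠ[nhds 0]
        (fun t : ℝ => (t ^ n / (n.factorial : ℝ)) • v) := by
      filter_upwards [φ.eventuallyEq_one] with t ht
      simp [ht]
    rw [he.iteratedDeriv_eq, iteratedDeriv_smul_const (by fun_prop), iteratedDeriv_div_const,
      iteratedDeriv_fun_pow_zero]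
    split_ifs with h
    · rw [div_self (by exact_mod_cast n.factorial_ne_zero), one_smul]
    · simp
  · have : ∀ k : ℕ, ∃ C, ∀ t, ‖iteratedFDeriv ℝ k
        (fun t : ℝ => (φ t * (t ^ n / (n.factorial : ℝ))) • v) t‖ ≤ C := fun k =>
      (hg.continuous_iteratedFDeriv (by exact_mod_cast le_top)).bounded_above_of_compact_support
        (hc.iteratedFDeriv k)
    choose M hM using this
    refine ⟨M, fun k t => ?_⟩
    rw [← norm_iteratedFDeriv_eq_norm_iteratedDeriv]
    exact hM k t

theorem borel_term {E : Type*} [NormedAddCommGroup E] [NormedSpace ℝ E] (n : ℕ) (v : E) :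
    ∃ f : ℝ → E, ContDiff ℝ (⊤ : ℕ∞) f ∧
      (∀ k, iteratedDeriv k f 0 = if k = n then v else 0) ∧
      (∀ t, ∃ r : ℝ, f t = r • v) ∧
      ∃ B : ℕ → ℝ, (∀ k t, ‖iteratedFDeriv ℝ k f t‖ ≤ B k) ∧ ∀ k < n, B k ≤ (1 / 2) ^ n := by
  obtain ⟨g, hg, hg0, hgv, M, hM⟩ := borel_base n v
  have hM0 : ∀ k, 0 ≤ M k := fun k => (norm_nonneg _).trans (hM k 0)
  obtain ⟨c, hc1, hc⟩ : ∃ c : ℝ, 1 ≤ c ∧ ∀ k < n, 2 ^ n * M k ≤ c := by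
    have hS : ∀ k, 0 ≤ 2 ^ n * M k := fun k => mul_nonneg (by positivity) (hM0 k)
    refine ⟨1 + ∑ k ∈ Finset.range n, 2 ^ n * M k, ?_, fun k hk => ?_⟩
    · linarith [Finset.sum_nonneg (s := Finset.range n) fun k _ => hS k]
    · linarith [Finset.single_le_sum (s := Finset.range n) (fun k _ => hS k)
        (Finset.mem_range.2 hk)]
  have hc0 : 0 < c := by linarith
  have hd : ∀ k t, iteratedDeriv k (fun t => (c ^ n)⁻¹ • g (c * t)) t =
      (c ^ n)⁻¹ • c ^ k • iteratedDeriv k g (c * t) := by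
    intro k t
    rw [iteratedDeriv_fun_const_smul_field,
      iteratedDeriv_comp_const_smul (hg.of_le (by exact_mod_cast le_top))]
  refine ⟨fun t => (c ^ n)⁻¹ • g (c * t), by fun_prop, ?_, ?_,
    fun k => (c ^ n)⁻¹ * (c ^ k * M k), ?_, ?_⟩
  · intro k
    rw [hd, mul_zero, hg0]
    split_ifs with h
    · subst h
      rw [smul_smul, inv_mul_cancel₀ (by positivity), one_smul]
    · simp
  · intro t
    obtain ⟨r, hr⟩ := hgv (c * t)
    exact ⟨(c ^ n)⁻¹ * r, by simp only [hr, smul_smul]⟩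
  · intro k t
    rw [norm_iteratedFDeriv_eq_norm_iteratedDeriv, hd, norm_smul, norm_smul,
      Real.norm_of_nonneg (by positivity), Real.norm_of_nonneg (by positivity)]
    exact mul_le_mul_of_nonneg_left
      (mul_le_mul_of_nonneg_left (hM k _) (by positivity)) (by positivity)
  · intro k hk
    have h1 : c ^ (k + 1) ≤ c ^ n := pow_le_pow_right₀ hc1 hk
    have h2 : (2 : ℝ) ^ n * (c ^ k * M k) ≤ c ^ n := by
      calc (2 : ℝ) ^ n * (c ^ k * M k) = c ^ k * (2 ^ n * M k) := by ring
        _ ≤ c ^ k * c := by gcongr; exact hc k hk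
        _ ≤ c ^ n := by rwa [← pow_succ]
    rw [one_div, inv_pow, inv_mul_le_iff₀ (by positivity), ← div_eq_mul_inv,
      le_div_iff₀ (by positivity), mul_comm]
    exact h2

/-- **Borel's Lemma with a linear constraint**: if `D : E →L[ℝ] F` kills every term of
the sequence `a : ℕ → E`, then the sequence is realized as the jet at `0` of a smooth
function `f : ℝ → E` taking values in the kernel of `D`. -/
theorem borel_lemma_with_constraint
    {E F : Type*} [NormedAddCommGroup E] [NormedSpace ℝ E] [CompleteSpace E]
    [NormedAddCommGroup F] [NormedSpace ℝ F] [CompleteSpace F]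
    (D : E →L[ℝ] F) (a : ℕ → E) (ha : ∀ n : ℕ, D (a n) = 0) :
    ∃ f : ℝ → E, ContDiff ℝ (⊤ : ℕ∞) f ∧ (∀ n : ℕ, iteratedDeriv n f 0 = a n) ∧
      ∀ t : ℝ, D (f t) = 0 := by
  choose f hf hf0 hfv B hB hBn using fun n => borel_term n (a n)
  have hs : ∀ k : ℕ, Summable (fun n => B n k) := by
    intro k
    rw [← summable_nat_add_iff (k + 1)]
    have hg : Summable (fun n : ℕ => ((1 : ℝ) / 2) ^ (n + (k + 1))) :=
      (summable_nat_add_iff (k + 1)).2 summable_geometric_two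
    refine Summable.of_nonneg_of_le (fun n => ?_) (fun n => ?_) hg
    · exact (norm_nonneg _).trans (hB _ k 0)
    · exact hBn _ k (by omega)
  refine ⟨fun t => ∑' n, f n t, ?_, ?_, ?_⟩
  · exact contDiff_tsum (v := fun k n => B n k) hf (fun k _ => hs k) (fun k n t _ => hB n k t)
  · intro k
    have hsum : Summable fun n => iteratedFDeriv ℝ k (f n) 0 :=
      .of_norm_bounded (hs k) fun n => hB n k 0
    rw [iteratedDeriv_eq_iteratedFDeriv,
      iteratedFDeriv_tsum_apply (N := ⊤) (v := fun k n => B n k) hf (fun k _ => hs k)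
        (fun k n t _ => hB n k t) le_top]
    have := (ContinuousMultilinearMap.hasSum_eval hsum.hasSum (fun _ => (1 : ℝ))).tsum_eq
    rw [← this]
    simp only [← iteratedDeriv_eq_iteratedFDeriv, hf0]
    simp
  · intro t
    have hsum : Summable fun n => f n t :=
      .of_norm_bounded (hs 0) fun n => by simpa using hB n 0 t
    rw [D.map_tsum hsum]
    have : ∀ n, D (f n t) = 0 := fun n => by
      obtain ⟨r, hr⟩ := hfv n t
      rw [hr, map_smul, ha, smul_zero]
    simp [this]
end

section
/- Borel's Lemma with simultaneous primitives: Let E and F be real Banach spaces, let D : F → E be a continuous linear map, and let (a_n)_{n∈ℕ} be a sequence in E and (ν_n)_{n∈ℕ} a sequence in F. Set b_n := a_n + D ν_n. Then there exist smooth functions f¹ : ℝ → E, f² : ℝ → E and g : ℝ → F such that for every n ∈ ℕ, iteratedDeriv n f¹ 0 = a_n, iteratedDeriv n f² 0 = b_n and iteratedDeriv n g 0 = ν_n, and moreover f² t − f¹ t = D (g t) for every t ∈ ℝ. -/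
open scoped ContDiff in
theorem borel_bump (n : ℕ) (ε : ℝ) (hε : 0 < ε) :
    ∃ ψ : ℝ → ℝ, ContDiff ℝ ∞ ψ ∧ (∀ k : ℕ, ∃ M : ℝ, ∀ x, ‖iteratedDeriv k ψ x‖ ≤ M) ∧
      (∀ k < n, ∀ x, ‖iteratedDeriv k ψ x‖ ≤ ε) ∧
      ∀ k : ℕ, iteratedDeriv k ψ 0 = if k = n then 1 else 0 := by
  obtain ⟨χ⟩ : Nonempty (ContDiffBump (0 : ℝ)) := inferInstance
  set φ : ℝ → ℝ := fun x => (n.factorial : ℝ)⁻¹ * (χ x * x ^ n) with hφ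
  have hφs : ContDiff ℝ ∞ φ := by
    have h : ContDiff ℝ ∞ χ := χ.contDiff
    exact contDiff_const.mul (h.mul (contDiff_id.pow n))
  have hφc : HasCompactSupport φ := (χ.hasCompactSupport.mul_right).mul_left
  have hb : ∀ k : ℕ, ∃ M : ℝ, ∀ x, ‖iteratedDeriv k φ x‖ ≤ M := by
    intro k
    obtain ⟨M, hM⟩ := (hφc.iteratedFDeriv (𝕜 := ℝ) k).exists_bound_of_continuous
      (hφs.continuous_iteratedFDeriv (m := k) (by exact_mod_cast le_top))
    exact ⟨M, fun x => by rw [← norm_iteratedFDeriv_eq_norm_iteratedDeriv]; exact hM x⟩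
  have h0 : ∀ k : ℕ, iteratedDeriv k φ 0 = if k = n then 1 else 0 := by
    intro k
    have h1 : φ =ᶠ[nhds 0] fun x => (n.factorial : ℝ)⁻¹ * x ^ n := by
      filter_upwards [χ.eventuallyEq_one] with x hx
      simp [hφ, hx]
    rw [h1.iteratedDeriv_eq, iteratedDeriv_const_mul_field, iteratedDeriv_fun_pow_zero]
    by_cases h : k = n
    · subst h
      have := k.factorial_ne_zero
      simp
      try field_simp
    · have h3 : n ≠ k := fun e => h e.symm
      simp [h]
  choose M hM using hb
  set S : ℝ := ∑ k ∈ Finset.range n, |M k| with hS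
  have hS0 : 0 ≤ S := Finset.sum_nonneg fun _ _ => abs_nonneg _
  set l : ℝ := 1 + S / ε with hl
  have hl1 : 1 ≤ l := by
    have : 0 ≤ S / ε := by positivity
    linarith
  have hl0 : 0 < l := by linarith
  have hSl : S ≤ ε * l := by
    rw [hl, mul_add, mul_div_cancel₀ _ hε.ne']; linarith
  have hd : ∀ k : ℕ, iteratedDeriv k (fun x => (l ^ n)⁻¹ * φ (l * x)) =
      fun x => (l ^ n)⁻¹ * (l ^ k * iteratedDeriv k φ (l * x)) := by
    intro k
    ext x
    rw [iteratedDeriv_const_mul_field]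
    rw [iteratedDeriv_comp_const_mul (hφs.of_le (by exact_mod_cast le_top))]
  refine ⟨fun x => (l ^ n)⁻¹ * φ (l * x), by fun_prop, ?_, ?_, ?_⟩
  · intro k
    refine ⟨(l ^ n)⁻¹ * (l ^ k * M k), fun x => ?_⟩
    rw [hd, norm_mul, norm_mul, Real.norm_of_nonneg (by positivity : 0 ≤ (l ^ n)⁻¹),
      Real.norm_of_nonneg (by positivity : 0 ≤ l ^ k)]
    gcongr
    exact hM k _
  · intro k hk x
    rw [hd, norm_mul, norm_mul, Real.norm_of_nonneg (by positivity : 0 ≤ (l ^ n)⁻¹),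
      Real.norm_of_nonneg (by positivity : 0 ≤ l ^ k)]
    have h1 : ‖iteratedDeriv k φ (l * x)‖ ≤ ε * l :=
      ((hM k _).trans (le_abs_self _)).trans ((Finset.single_le_sum
        (f := fun k => |M k|) (fun _ _ => abs_nonneg _) (Finset.mem_range.2 hk)).trans hSl)
    rw [inv_mul_le_iff₀ (by positivity)]
    calc l ^ k * ‖iteratedDeriv k φ (l * x)‖ ≤ l ^ k * (ε * l) := by gcongr
      _ = l ^ (k + 1) * ε := by ring
      _ ≤ l ^ n * ε := by gcongr; exact hk
  · intro k
    rw [hd]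
    simp only [mul_zero, h0]
    split_ifs with h
    · subst h
      field_simp
    · simp

open scoped ContDiff in
theorem borel_single {E : Type*} [NormedAddCommGroup E] [NormedSpace ℝ E] [CompleteSpace E]
    (a : ℕ → E) : ∃ f : ℝ → E, ContDiff ℝ ∞ f ∧ ∀ n : ℕ, iteratedDeriv n f 0 = a n := by
  choose ψ hs hb hε h0 using fun n : ℕ =>
    borel_bump n ((1 / 2 : ℝ) ^ n / (‖a n‖ + 1)) (by positivity)
  choose M hM using hb
  have hd : ∀ n k x, iteratedDeriv k (fun x => ψ n x • a n) x = iteratedDeriv k (ψ n) x • a n :=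
    fun n k x => iteratedDeriv_smul_const
      ((hs n).of_le (by exact_mod_cast le_top)).contDiffAt _
  have hsm : ∀ n, ContDiff ℝ ∞ (fun x => ψ n x • a n) := fun n => (hs n).smul contDiff_const
  let v : ℕ → ℕ → ℝ := fun k n => if k < n then (1 / 2 : ℝ) ^ n else M n k * ‖a n‖
  have hv : ∀ k : ℕ, (k : ℕ∞) ≤ ⊤ → Summable (v k) := by
    intro k _
    refine (summable_geometric_two).congr_cofinite ?_
    rw [Nat.cofinite_eq_atTop]
    filter_upwards [Filter.eventually_gt_atTop k] with n hn
    simp [v, hn]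
  have hbd : ∀ (k n : ℕ) (x : ℝ), (k : ℕ∞) ≤ ⊤ →
      ‖iteratedFDeriv ℝ k (fun x => ψ n x • a n) x‖ ≤ v k n := by
    intro k n x _
    rw [norm_iteratedFDeriv_eq_norm_iteratedDeriv, hd, norm_smul]
    simp only [v]
    split_ifs with h
    · calc _ ≤ (1 / 2 : ℝ) ^ n / (‖a n‖ + 1) * (‖a n‖ + 1) := by
            gcongr
            · exact hε n k h x
            · linarith
        _ = _ := by field_simp
    · gcongr
      exact hM n k x
  refine ⟨fun x => ∑' n, ψ n x • a n, contDiff_tsum hsm hv hbd, fun k => ?_⟩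
  have hsum : Summable fun n => iteratedFDeriv ℝ k (fun x => ψ n x • a n) 0 :=
    Summable.of_norm_bounded (hv k le_top) fun n => hbd k n 0 le_top
  rw [iteratedDeriv_eq_iteratedFDeriv, iteratedFDeriv_tsum_apply hsm hv hbd le_top,
    ContinuousMultilinearMap.tsum_eval hsum]
  simp only [← iteratedDeriv_eq_iteratedFDeriv, hd, h0]
  rw [tsum_eq_single k]
  · simp
  · intro n hn
    simp [hn.symm]


/-- **Borel's Lemma with simultaneous primitives**: two sequences `a n` and
`b n = a n + D (ν n)` differing by `D` of a sequence `ν` are realized as the jets at `0`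
of smooth functions `f¹, f²` whose difference is `D` of a smooth realization `g` of `ν`. -/
theorem borel_lemma_simultaneous_primitives
    {E F : Type*} [NormedAddCommGroup E] [NormedSpace ℝ E] [CompleteSpace E]
    [NormedAddCommGroup F] [NormedSpace ℝ F] [CompleteSpace F]
    (D : F →L[ℝ] E) (a : ℕ → E) (ν : ℕ → F) :
    ∃ f₁ f₂ : ℝ → E, ∃ g : ℝ → F,
      ContDiff ℝ (⊤ : ℕ∞) f₁ ∧ ContDiff ℝ (⊤ : ℕ∞) f₂ ∧ ContDiff ℝ (⊤ : ℕ∞) g ∧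
      (∀ n : ℕ, iteratedDeriv n f₁ 0 = a n) ∧
      (∀ n : ℕ, iteratedDeriv n f₂ 0 = a n + D (ν n)) ∧
      (∀ n : ℕ, iteratedDeriv n g 0 = ν n) ∧
      ∀ t : ℝ, f₂ t - f₁ t = D (g t) := by
  obtain ⟨f, hf, hf0⟩ := borel_single a
  obtain ⟨g, hg, hg0⟩ := borel_single ν
  have hDg : ContDiff ℝ (⊤ : ℕ∞) (fun t => D (g t)) := D.contDiff.comp hg
  refine ⟨f, fun t => f t + D (g t), g, hf, hf.add hDg, hg, hf0, fun n => ?_, hg0, fun t => by simp⟩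
  have h1 : iteratedDeriv n (fun t => D (g t)) 0 = D (ν n) := by
    rw [← hg0 n, iteratedDeriv_eq_iteratedFDeriv, iteratedDeriv_eq_iteratedFDeriv]
    have := D.iteratedFDeriv_comp_left (hg.contDiffAt (x := 0)) (i := n)
      (by exact_mod_cast le_top)
    change iteratedFDeriv ℝ n (D ∘ g) 0 _ = _
    rw [this]
    rfl
  have h2 := iteratedDeriv_add (n := n) (x := (0 : ℝ))
    ((hf.of_le (by exact_mod_cast le_top)).contDiffAt)
    ((hDg.of_le (by exact_mod_cast le_top)).contDiffAt)
  rw [hf0, h1] at h2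
  exact h2
end
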